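/- Let w: [0,R] → ℝ be a C² function and let v(x) = w(H^o(x)) for x ∈ 𝒲_R ∖ {0}. Then v is C² on 𝒲_R ∖ {0} and the anisotropic Monge–Ampère operator applied to v satisfies det A[v](x) = w'(r)·w''(r)/r = [((w')²)'(r)]/(2r), where r = H^o(x), and moreover F_ξ(∇v(x)) = w'(r)·x/H^o(x). -/

import Mathlib

open MeasureTheory Set
open scoped ENNReal NNReal RealInnerProductSpace

noncomputable section

/-- The plane `ℝ²`. -/
abbrev E2 : Type := EuclideanSpace ℝ (Fin 2)

/-- The `i`-th partial derivative of `f` at `x`. -/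
def pd (f : E2 → ℝ) (i : Fin 2) (x : E2) : ℝ :=
  fderiv ℝ f x (EuclideanSpace.single i 1)

/-- The Hessian matrix of `f` at `x`. -/
def hessian (f : E2 → ℝ) (x : E2) : Matrix (Fin 2) (Fin 2) ℝ :=
  Matrix.of fun i j => pd (pd f j) i x

/-- The hypotheses on the anisotropy `H`: a convex, coercive, positively `1`-homogeneous even
function, with `H²` strongly convex and `C²` away from the origin. -/
structure IsAnisoNorm (H : E2 → ℝ) : Prop where
  nonneg : ∀ ξ, 0 ≤ H ξ
  convex : ConvexOn ℝ Set.univ H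
  coercive : ∃ α > 0, ∀ ξ, α * ‖ξ‖ ≤ H ξ
  homog : ∀ (t : ℝ) (ξ : E2), H (t • ξ) = |t| * H ξ
  smooth : ContDiffOn ℝ 2 H {(0 : E2)}ᶜ
  posdef : ∀ ξ : E2, ξ ≠ 0 → ∀ v : E2, v ≠ 0 →
      0 < ∑ i, ∑ j, hessian (fun z => H z ^ 2) ξ i j * v i * v j

/-- The polar function `H^o(v) = sup_{ξ ≠ 0} (ξ·v)/H(ξ)`. -/
def polar (H : E2 → ℝ) (v : E2) : ℝ :=
  ⨆ ξ : {ξ : E2 // ξ ≠ 0}, ⟪(ξ : E2), v⟫ / H ξ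

/-- The Wulff shape `𝒲 = {H^o < 1}`. -/
def Wulff (H : E2 → ℝ) : Set E2 := {ξ | polar H ξ < 1}

/-- The scaled Wulff shape `𝒲_R = {H^o < R}`. -/
def wulffR (H : E2 → ℝ) (R : ℝ) : Set E2 := {ξ | polar H ξ < R}

/-- `κ`, the Lebesgue measure of the Wulff shape. -/
def kappa (H : E2 → ℝ) : ℝ := (volume (Wulff H)).toReal

/-- `F(ξ) = H(ξ)²/2`. -/
def Fani (H : E2 → ℝ) (ξ : E2) : ℝ := H ξ ^ 2 / 2

/-- The matrix `A[u] = ∇²_ξ F(∇u) · ∇²u`. -/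
def Amat (H u : E2 → ℝ) (x : E2) : Matrix (Fin 2) (Fin 2) ℝ :=
  hessian (Fani H) (gradient u x) * hessian u x

/-- The anisotropic Monge–Ampère operator `det_H[u] = det ∇²_ξF(∇u) · det ∇²u`. -/
def detH (H u : E2 → ℝ) (x : E2) : ℝ :=
  (hessian (Fani H) (gradient u x)).det * (hessian u x).det

/-- The cofactor matrix of a `2×2` matrix. -/
def cof (B : Matrix (Fin 2) (Fin 2) ℝ) : Matrix (Fin 2) (Fin 2) ℝ :=
  Matrix.of ![![B 1 1, -B 1 0], ![-B 0 1, B 0 0]]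

/-- The anisotropic curvature of the level line of `u` through `x`:
`k_H(x) = -Σ_{i,j} H_{ξ_iξ_j}(∇u) u_{ij}`. -/
def kH (H u : E2 → ℝ) (x : E2) : ℝ :=
  -∑ i, ∑ j, hessian H (gradient u x) i j * hessian u x i j

/-- The class `Φ₀(Ω)`: `W^{2,2}(Ω) ∩ C¹(Ω̄)` functions vanishing on `∂Ω`, concave in `Ω`. -/
structure MemPhi0 (Ω : Set E2) (u : E2 → ℝ) : Prop where
  sobolev : ∀ i j, MemLp (fun x => hessian u x i j) 2 (volume.restrict Ω)
  c1 : ContDiffOn ℝ 1 u (closure Ω)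
  bzero : ∀ x ∈ frontier Ω, u x = 0
  concave : ConcaveOn ℝ Ω u

/-- `max_{Ω̄} u`. -/
def maxcl (Ω : Set E2) (u : E2 → ℝ) : ℝ := sSup (u '' closure Ω)

/-- The set `E_u = {x ∈ Ω : 0 ≤ u(x) < max_{Ω̄} u}`. -/
def Eu (Ω : Set E2) (u : E2 → ℝ) : Set E2 :=
  {x ∈ Ω | 0 ≤ u x ∧ u x < maxcl Ω u}

/-- `K` has `C²` boundary: it admits a global `C²` defining function with nonvanishing
gradient on the boundary. -/
def HasC2Boundary (K : Set E2) : Prop :=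
  ∃ φ : E2 → ℝ, ContDiff ℝ 2 φ ∧ K = {x | φ x < 0} ∧
    frontier K = {x | φ x = 0} ∧ ∀ x ∈ frontier K, gradient φ x ≠ 0

/-- `K` has `C¹` boundary. -/
def HasC1Boundary (K : Set E2) : Prop :=
  ∃ φ : E2 → ℝ, ContDiff ℝ 1 φ ∧ K = {x | φ x < 0} ∧
    frontier K = {x | φ x = 0} ∧ ∀ x ∈ frontier K, gradient φ x ≠ 0

/-- The Euclidean outer unit normal `ν = -∇u/|∇u|` to a superlevel set of `u`. -/
def nuLevel (u : E2 → ℝ) (x : E2) : E2 := -(‖gradient u x‖⁻¹ • gradient u x)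

/-- The level set `Σ_t = {u = t}` (in `Ω̄`). -/
def levelSet (Ω : Set E2) (u : E2 → ℝ) (t : ℝ) : Set E2 :=
  {x ∈ closure Ω | u x = t}

/-- The superlevel set `Ω_t = {u > t}`. -/
def superLevel (Ω : Set E2) (u : E2 → ℝ) (t : ℝ) : Set E2 :=
  {x ∈ Ω | t < u x}

/-- `λ_H(t) = P_H({u > t}) = ∫_{{u = t}} H(ν) dℋ¹`. -/
def lambdaH (H : E2 → ℝ) (Ω : Set E2) (u : E2 → ℝ) (t : ℝ) : ℝ :=
  ∫ x in levelSet Ω u t, H (nuLevel u x) ∂(μH[1] : Measure E2)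

/-- The anisotropic perimeter `P_H(Ω) = λ_H(0)` of `Ω = {u > 0}`. -/
def PerH (H : E2 → ℝ) (Ω : Set E2) (u : E2 → ℝ) : ℝ := lambdaH H Ω u 0

/-- The rearrangement `u^♦(s) = sup{t ≥ 0 : λ_H(t) ≥ s}` of `u` with respect to the
anisotropic perimeter. -/
def diamondRe (H : E2 → ℝ) (Ω : Set E2) (u : E2 → ℝ) (s : ℝ) : ℝ :=
  sSup {t : ℝ | 0 ≤ t ∧ s ≤ lambdaH H Ω u t}

/-- The anisotropic radial symmetrand `u^★(x) = u^♦(2κ H^o(x))`. -/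
def starRe (H : E2 → ℝ) (Ω : Set E2) (u : E2 → ℝ) (x : E2) : ℝ :=
  diamondRe H Ω u (2 * kappa H * polar H x)

/-- `Ω^★ = 𝒲_R` with `R = P_H(Ω)/(2κ)`. -/
def OmegaStar (H : E2 → ℝ) (Ω : Set E2) (u : E2 → ℝ) : Set E2 :=
  wulffR H (PerH H Ω u / (2 * kappa H))

/-- The distribution function `μ(t) = |{x ∈ Ω : |f(x)| > t}|`. -/
def distrib (Ω : Set E2) (f : E2 → ℝ) (t : ℝ) : ℝ :=
  (volume {x ∈ Ω | t < |f x|}).toReal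

/-- The decreasing rearrangement `f*(s) = sup{t : μ(t) > s}`. -/
def decRe (Ω : Set E2) (f : E2 → ℝ) (s : ℝ) : ℝ :=
  sSup {t : ℝ | s < distrib Ω f t}

open Filter Topology

namespace AnisoAux

lemma H_zero {H : E2 → ℝ} (hH : IsAnisoNorm H) : H 0 = 0 := by
  simpa using hH.homog 0 0

lemma H_pos {H : E2 → ℝ} (hH : IsAnisoNorm H) {ξ : E2} (h : ξ ≠ 0) : 0 < H ξ := by
  obtain ⟨α, hα, h1⟩ := hH.coercive
  exact lt_of_lt_of_le (mul_pos hα (norm_pos_iff.2 h)) (h1 ξ)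

lemma H_cd {H : E2 → ℝ} (hH : IsAnisoNorm H) {ξ : E2} (h : ξ ≠ 0) : ContDiffAt ℝ 2 H ξ :=
  hH.smooth.contDiffAt (isOpen_compl_singleton.mem_nhds h)

lemma F_cd {H : E2 → ℝ} (hH : IsAnisoNorm H) {ξ : E2} (h : ξ ≠ 0) :
    ContDiffAt ℝ 2 (Fani H) ξ := by
  unfold Fani
  exact ((H_cd hH h).pow 2).div_const 2

lemma inner_grad (f : E2 → ℝ) (x h : E2) : ⟪gradient f x, h⟫ = fderiv ℝ f x h := by
  simp [gradient]

lemma grad_apply (f : E2 → ℝ) (x : E2) (i : Fin 2) : gradient f x i = pd f i x := by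
  rw [pd, ← inner_grad, EuclideanSpace.inner_single_right]
  simp

lemma hasF {H : E2 → ℝ} (hH : IsAnisoNorm H) {ξ : E2} (h : ξ ≠ 0) :
    HasFDerivAt (Fani H) (fderiv ℝ (Fani H) ξ) ξ :=
  ((F_cd hH h).differentiableAt (by norm_num)).hasFDerivAt

lemma grad_cd {f : E2 → ℝ} {x : E2} (h : ContDiffAt ℝ 2 f x) :
    ContDiffAt ℝ 1 (gradient f) x := by
  have h1 : ContDiffAt ℝ 1 (fderiv ℝ f) x := h.fderiv_right (by norm_num)
  exact ((InnerProductSpace.toDual ℝ E2).symm.toContinuousLinearEquiv.contDiff.contDiffAt).comp x h1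

lemma F_smul {H : E2 → ℝ} (hH : IsAnisoNorm H) (t : ℝ) (ξ : E2) :
    Fani H (t • ξ) = t ^ 2 * Fani H ξ := by
  simp only [Fani, hH.homog, mul_pow, sq_abs]; ring

lemma grad_smul {H : E2 → ℝ} (hH : IsAnisoNorm H) (t : ℝ) {ξ : E2} (h : ξ ≠ 0) :
    gradient (Fani H) (t • ξ) = t • gradient (Fani H) ξ := by
  rcases eq_or_ne t 0 with rfl | ht
  · have : IsLocalMin (Fani H) 0 := Filter.Eventually.of_forall fun y => by
      change Fani H 0 ≤ Fani H y
      have h0 : Fani H 0 = 0 := by simp [Fani, H_zero hH]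
      rw [h0]; unfold Fani; positivity
    simp [gradient, this.fderiv_eq_zero]
  · have h1 := fderiv_comp_smul (𝕜 := ℝ) (f := Fani H) (x := ξ) t
    have h2 : (fun z => Fani H (t • z)) = fun z => t ^ 2 • Fani H z := by
      funext z; simp [F_smul hH]
    rw [h2, fderiv_fun_const_smul ((F_cd hH h).differentiableAt (by norm_num))] at h1
    have h3 : fderiv ℝ (Fani H) (t • ξ) = t • fderiv ℝ (Fani H) ξ := by
      have : t • fderiv ℝ (Fani H) (t • ξ) = t • (t • fderiv ℝ (Fani H) ξ) := by
        rw [← h1, smul_smul, sq]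
      exact smul_right_injective _ ht this
    simp [gradient, h3]

lemma line_deriv {H : E2 → ℝ} (hH : IsAnisoNorm H) {ζ : E2} (h : ζ ≠ 0) (η : E2) :
    HasDerivAt (fun t : ℝ => Fani H (ζ + t • η)) ⟪gradient (Fani H) ζ, η⟫ 0 := by
  rw [inner_grad]
  have h1 : HasDerivAt (fun t : ℝ => ζ + t • η) η 0 := by
    simpa using ((hasDerivAt_id (0 : ℝ)).smul_const η).const_add ζ
  have h2 : HasFDerivAt (Fani H) (fderiv ℝ (Fani H) ζ) (ζ + (0 : ℝ) • η) := by
    simpa using hasF hH h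
  exact h2.comp_hasDerivAt (0 : ℝ) h1

lemma euler {H : E2 → ℝ} (hH : IsAnisoNorm H) {ζ : E2} (h : ζ ≠ 0) :
    ⟪gradient (Fani H) ζ, ζ⟫ = H ζ ^ 2 := by
  have h1 := line_deriv hH h ζ
  have h2 : (fun t : ℝ => Fani H (ζ + t • ζ)) = fun t : ℝ => (1 + t) ^ 2 * Fani H ζ := by
    funext t
    rw [← F_smul hH, add_smul, one_smul]
  rw [h2] at h1
  have h3 : HasDerivAt (fun t : ℝ => (1 + t) ^ 2 * Fani H ζ) (H ζ ^ 2) 0 := by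
    have := ((((hasDerivAt_id (0 : ℝ)).const_add 1).pow 2).mul_const (Fani H ζ))
    exact this.congr_deriv (by simp [Fani]; ring)
  exact h1.unique h3

lemma H_add {H : E2 → ℝ} (hH : IsAnisoNorm H) (a b : E2) : H (a + b) ≤ H a + H b := by
  have h1 := hH.convex.2 (mem_univ ((2 : ℝ) • a)) (mem_univ ((2 : ℝ) • b))
    (by norm_num : (0 : ℝ) ≤ 1 / 2) (by norm_num : (0 : ℝ) ≤ 1 / 2) (by norm_num)
  simp only [smul_smul, hH.homog, smul_eq_mul] at h1
  norm_num at h1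
  linarith

lemma grad_le {H : E2 → ℝ} (hH : IsAnisoNorm H) {ζ : E2} (h : ζ ≠ 0) (η : E2) :
    ⟪gradient (Fani H) ζ, η⟫ ≤ H ζ * H η := by
  have h1 := line_deriv hH h η
  have h3 : HasDerivAt (fun t : ℝ => (H ζ + t * H η) ^ 2 / 2) (H ζ * H η) 0 := by
    have := ((((hasDerivAt_id (0 : ℝ)).mul_const (H η)).const_add (H ζ)).pow 2).div_const 2
    exact this.congr_deriv (by simp; ring)
  have h4 := (h3.sub h1).tendsto_slope_zero_right
  have : 0 ≤ H ζ * H η - ⟪gradient (Fani H) ζ, η⟫ := by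
    refine ge_of_tendsto h4 ?_
    filter_upwards [self_mem_nhdsWithin] with t ht
    have ht : 0 < t := ht
    have h5 : H (ζ + t • η) ≤ H ζ + t * H η := by
      have := H_add hH ζ (t • η)
      rwa [hH.homog, abs_of_pos ht] at this
    have h6 := pow_le_pow_left₀ (hH.nonneg _) h5 2
    simp only [Fani, zero_add, zero_mul, zero_smul, add_zero, sub_self, sub_zero, smul_eq_mul,
      Pi.sub_apply]
    have : 0 < t⁻¹ := inv_pos.2 ht
    apply mul_nonneg this.le
    linarith
  linarith

lemma polar_grad {H : E2 → ℝ} (hH : IsAnisoNorm H) {ζ : E2} (h : ζ ≠ 0) :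
    polar H (gradient (Fani H) ζ) = H ζ := by
  have hb : ∀ ξ : {ξ : E2 // ξ ≠ 0}, ⟪(ξ : E2), gradient (Fani H) ζ⟫ / H ξ ≤ H ζ := by
    intro ξ
    rw [div_le_iff₀ (H_pos hH ξ.2), real_inner_comm]
    exact grad_le hH h _
  have : Nonempty {ξ : E2 // ξ ≠ 0} := ⟨⟨ζ, h⟩⟩
  apply le_antisymm
  · exact ciSup_le hb
  · refine le_ciSup_of_le ⟨H ζ, ?_⟩ ⟨ζ, h⟩ ?_
    · rintro _ ⟨ξ, rfl⟩; exact hb ξ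
    · have := H_pos hH h
      rw [real_inner_comm, euler hH h]
      field_simp
      exact le_rfl

lemma grad_surj {H : E2 → ℝ} (hH : IsAnisoNorm H) {x : E2} (hx : x ≠ 0) :
    ∃ ζ : E2, ζ ≠ 0 ∧ gradient (Fani H) ζ = x := by
  obtain ⟨α, hα, hc⟩ := hH.coercive
  have hcont : Continuous H := hH.convex.locallyLipschitz.continuous
  have hΦ : Continuous (fun ζ => Fani H ζ - ⟪x, ζ⟫) := by
    unfold Fani; fun_prop
  have hlow : ∀ ζ, ‖ζ‖ * (α ^ 2 / 2 * ‖ζ‖ - ‖x‖) ≤ Fani H ζ - ⟪x, ζ⟫ := by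
    intro ζ
    have h1 := real_inner_le_norm x ζ
    have h2 := pow_le_pow_left₀ (by positivity) (hc ζ) 2
    simp only [Fani]; nlinarith
  obtain ⟨ζ, hζ⟩ := hΦ.exists_forall_le' (x₀ := 0) (by
    have : ∀ᶠ ζ : E2 in cocompact E2, 2 * ‖x‖ / α ^ 2 ≤ ‖ζ‖ :=
      (tendsto_norm_cocompact_atTop (E := E2)).eventually_ge_atTop _
    filter_upwards [this] with ζ h
    refine le_trans ?_ (hlow ζ)
    have : Fani H 0 - ⟪x, (0 : E2)⟫ = 0 := by simp [Fani, H_zero hH]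
    rw [this]
    apply mul_nonneg (norm_nonneg _)
    rw [div_le_iff₀ (by positivity)] at h
    linarith)
  have hζ0 : ζ ≠ 0 := by
    rintro rfl
    have hF : 0 < Fani H x := by have := H_pos hH hx; unfold Fani; positivity
    have hn : 0 < ‖x‖ := norm_pos_iff.2 hx
    have := hζ ((‖x‖ ^ 2 / (2 * Fani H x)) • x)
    rw [F_smul hH, inner_smul_right, real_inner_self_eq_norm_sq] at this
    simp only [inner_zero_right, sub_zero] at this
    have h0 : Fani H 0 = 0 := by simp [Fani, H_zero hH]
    rw [h0] at this
    have e : (‖x‖ ^ 2 / (2 * Fani H x)) ^ 2 * Fani H x - ‖x‖ ^ 2 / (2 * Fani H x) * ‖x‖ ^ 2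
        = -(‖x‖ ^ 4 / (4 * Fani H x)) := by field_simp; ring
    rw [e] at this
    have : 0 < ‖x‖ ^ 4 / (4 * Fani H x) := by positivity
    linarith
  refine ⟨ζ, hζ0, ?_⟩
  have hmin : IsLocalMin (fun ζ => Fani H ζ - ⟪x, ζ⟫) ζ := Filter.Eventually.of_forall hζ
  have hd : HasFDerivAt (fun ζ => Fani H ζ - ⟪x, ζ⟫) (fderiv ℝ (Fani H) ζ - innerSL ℝ x) ζ :=
    (hasF hH hζ0).sub (innerSL ℝ x).hasFDerivAt
  have := hmin.hasFDerivAt_eq_zero hd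
  apply ext_inner_right ℝ
  intro h
  rw [inner_grad]
  have h2 := congrArg (fun L => L h) this
  simp at h2
  linarith

/-- entries of the Hessian in terms of the derivative of the gradient -/
lemma hessian_apply {f : E2 → ℝ} {x : E2} {L : E2 →L[ℝ] E2} (h : HasFDerivAt (gradient f) L x)
    (i j : Fin 2) : hessian f x i j = L (EuclideanSpace.single i 1) j := by
  have h1 : pd f j = fun y => gradient f y j := by funext y; rw [grad_apply]
  have h2 : HasFDerivAt (fun y => gradient f y j) ((EuclideanSpace.proj j).comp L) x :=
    (EuclideanSpace.proj (𝕜 := ℝ) j).hasFDerivAt.comp x h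
  simp only [hessian, Matrix.of_apply]
  rw [h1, pd, h2.fderiv]
  simp

lemma vec_eq (v : E2) :
    v = v 0 • EuclideanSpace.single 0 (1 : ℝ) + v 1 • EuclideanSpace.single 1 (1 : ℝ) := by
  ext i; fin_cases i <;> simp

lemma map_apply (L : E2 →L[ℝ] E2) (v : E2) (j : Fin 2) :
    L v j = v 0 * L (EuclideanSpace.single 0 1) j + v 1 * L (EuclideanSpace.single 1 1) j := by
  conv_lhs => rw [vec_eq v]
  simp

lemma hessian_comp_det {f k : E2 → ℝ} {x y : E2} {L M : E2 →L[ℝ] E2}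
    (hf : HasFDerivAt (gradient f) L y) (hk : HasFDerivAt (gradient k) M x) :
    (hessian f y).det * (hessian k x).det =
      (Matrix.of fun i j : Fin 2 => L (M (EuclideanSpace.single i 1)) j).det := by
  simp only [Matrix.det_fin_two, hessian_apply hf, hessian_apply hk, Matrix.of_apply]
  simp only [map_apply L (M _)]
  ring

lemma grad_inj {H : E2 → ℝ} (hH : IsAnisoNorm H) {ζ : E2} (h : ζ ≠ 0) {L : E2 →L[ℝ] E2}
    (hL : HasFDerivAt (gradient (Fani H)) L ζ) : Function.Injective L := by
  rw [injective_iff_map_eq_zero]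
  intro v hv
  by_contra hne
  have h1 := hH.posdef ζ h v hne
  have h2 : (fun z => H z ^ 2) = fun z => (2 : ℝ) • Fani H z := by
    funext z; simp [Fani]; ring
  have h3 : gradient (fun z => H z ^ 2) =ᶠ[𝓝 ζ] fun z => (2 : ℝ) • gradient (Fani H) z := by
    filter_upwards [isOpen_compl_singleton.mem_nhds h] with z hz
    have hz : z ≠ 0 := hz
    rw [h2]
    simp only [gradient]
    rw [fderiv_fun_const_smul ((F_cd hH hz).differentiableAt (by norm_num))]
    simp
  have h4 : HasFDerivAt (gradient (fun z => H z ^ 2)) ((2 : ℝ) • L) ζ :=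
    (hL.const_smul (2 : ℝ)).congr_of_eventuallyEq h3
  simp only [hessian_apply h4, Fin.sum_univ_two, smul_apply,
    PiLp.smul_apply, smul_eq_mul] at h1
  have e0 := map_apply L v 0
  have e1 := map_apply L v 1
  rw [hv] at e0 e1
  simp at e0 e1
  apply lt_irrefl (0 : ℝ)
  refine lt_of_lt_of_eq h1 ?_
  linear_combination (-2 * v 0) * e0 + (-2 * v 1) * e1

lemma local_inv {H : E2 → ℝ} (hH : IsAnisoNorm H) {x : E2} (hx : x ≠ 0) :
    ∃ T : E2 → E2, ContDiffAt ℝ 1 T x ∧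
      ∀ᶠ y in 𝓝 x, T y ≠ 0 ∧ gradient (Fani H) (T y) = y := by
  obtain ⟨ζ, hζ, rfl⟩ := grad_surj hH hx
  have hcd := grad_cd (F_cd hH hζ)
  have hd := (hcd.differentiableAt (by norm_num)).hasFDerivAt
  have hinj := grad_inj hH hζ hd
  set L := fderiv ℝ (gradient (Fani H)) ζ
  let e : E2 ≃L[ℝ] E2 :=
    (LinearEquiv.ofInjectiveEndo (L : E2 →ₗ[ℝ] E2) hinj).toContinuousLinearEquiv
  have he : (e : E2 →L[ℝ] E2) = L := by ext v : 1; rfl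
  rw [← he] at hd
  refine ⟨hcd.localInverse hd (by norm_num), hcd.to_localInverse hd (by norm_num), ?_⟩
  have hc := (hcd.to_localInverse hd (by norm_num)).continuousAt
  have h0 : hcd.localInverse hd (by norm_num) (gradient (Fani H) ζ) ≠ 0 := by
    rwa [hcd.localInverse_apply_image]
  filter_upwards [hc.eventually_ne h0,
    (hcd.hasStrictFDerivAt' hd (by norm_num)).eventually_right_inverse] with y h1 h2
  exact ⟨h1, h2⟩

lemma polar_local {H : E2 → ℝ} (hH : IsAnisoNorm H) {x : E2} (hx : x ≠ 0) :
    ∃ T : E2 → E2, ContDiffAt ℝ 1 T x ∧ ContDiffAt ℝ 2 (polar H) x ∧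
      ∀ᶠ y in 𝓝 x, T y ≠ 0 ∧ gradient (Fani H) (T y) = y ∧ 0 < polar H y ∧
        ⟪T y, y⟫ = polar H y ^ 2 ∧
        HasFDerivAt (polar H) (innerSL ℝ ((polar H y)⁻¹ • T y)) y := by
  obtain ⟨T, hT, hev⟩ := local_inv hH hx
  have hPev : ∀ᶠ y in 𝓝 x, polar H y = H (T y) := by
    filter_upwards [hev] with y hy
    rw [← polar_grad hH hy.1, hy.2]
  have hP1 : ContDiffAt ℝ 1 (polar H) x := by
    refine ContDiffAt.congr_of_eventuallyEq ?_ hPev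
    exact ((H_cd hH hev.self_of_nhds.1).of_le (by norm_num)).comp x hT
  have hTd : ∀ᶠ y in 𝓝 x, DifferentiableAt ℝ T y := by
    filter_upwards [hT.eventually (by simp)] with y hy using hy.differentiableAt (by norm_num)
  have hPd : ∀ᶠ y in 𝓝 x, DifferentiableAt ℝ (polar H) y := by
    filter_upwards [hP1.eventually (by simp)] with y hy using hy.differentiableAt (by norm_num)
  have hmain : ∀ᶠ y in 𝓝 x, T y ≠ 0 ∧ gradient (Fani H) (T y) = y ∧ 0 < polar H y ∧
        ⟪T y, y⟫ = polar H y ^ 2 ∧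
        HasFDerivAt (polar H) (innerSL ℝ ((polar H y)⁻¹ • T y)) y := by
    filter_upwards [hev.eventually_nhds, hPev.eventually_nhds, hTd, hPd] with y h1 h2 h3 h4
    obtain ⟨a1, a2⟩ := h1.self_of_nhds
    have a3 := h2.self_of_nhds
    have a4 : 0 < polar H y := by rw [a3]; exact H_pos hH a1
    have ee : ∀ᶠ z in 𝓝 y, ⟪T z, z⟫ = polar H z ^ 2 := by
      filter_upwards [h1, h2] with z b1 b2
      have := euler hH b1.1
      rw [b1.2] at this
      rw [b2, ← this, real_inner_comm]
    have ef : ∀ᶠ z in 𝓝 y, Fani H (T z) = polar H z ^ 2 * (1 / 2) := by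
      filter_upwards [h2] with z b2
      rw [b2, Fani]; ring
    refine ⟨a1, a2, a4, ee.self_of_nhds, ?_⟩
    have d1 := (hasF hH a1).comp y h3.hasFDerivAt
    have d2 := h4.hasFDerivAt
    have d3 := ((d2.pow 2)).congr_of_eventuallyEq ee
    have d4 := ((d2.pow 2).mul_const (1 / 2 : ℝ)).congr_of_eventuallyEq ef
    have d5 := h3.hasFDerivAt.inner ℝ (hasFDerivAt_id y)
    have c1 := d1.unique d4
    have c2 := d5.unique d3
    have hF : ∀ k, fderiv ℝ (Fani H) (T y) k = ⟪y, k⟫ := fun k => by rw [← inner_grad, a2]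
    have hL : innerSL ℝ ((polar H y)⁻¹ • T y) = fderiv ℝ (polar H) y := by
      refine ContinuousLinearMap.ext fun h => ?_
      have c1 := congrArg (fun L => L h) c1
      have c2 := congrArg (fun L => L h) c2
      simp [hF] at c1 c2
      rw [real_inner_comm] at c1
      simp only [map_smul, smul_apply, innerSL_apply_apply, smul_eq_mul]
      field_simp
      linarith
    rw [hL]
    exact d2
  refine ⟨T, hT, ?_, hmain⟩
  have h2 : (2 : WithTop ℕ∞) = ((1 : ℕ) : WithTop ℕ∞) + 1 := by norm_num
  rw [h2, contDiffAt_succ_iff_hasFDerivAt]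
  refine ⟨fun y => innerSL ℝ ((polar H y)⁻¹ • T y), ⟨_, hmain, fun y hy => hy.2.2.2.2⟩, ?_⟩
  have hp : polar H x ≠ 0 := hmain.self_of_nhds.2.2.1.ne'
  exact (innerSL ℝ (E := E2)).contDiff.contDiffAt.comp x ((hP1.inv hp).smul hT)

lemma main_local {H : E2 → ℝ} (hH : IsAnisoNorm H) {w : ℝ → ℝ} {x : E2} (hx : x ≠ 0)
    (hw : ContDiffAt ℝ 2 w (polar H x)) {v : E2 → ℝ} (hv : ∀ x, v x = w (polar H x)) :
    ContDiffAt ℝ 2 v x ∧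
      (Amat H v x).det = deriv w (polar H x) * deriv (deriv w) (polar H x) / polar H x ∧
      gradient (Fani H) (gradient v x) = (deriv w (polar H x) / polar H x) • x := by
  obtain ⟨T, hT, hP, hev⟩ := polar_local hH hx
  have hvcd : ContDiffAt ℝ 2 v x := by
    have : v = w ∘ polar H := funext hv
    rw [this]
    exact hw.comp x hP
  have hwd : ∀ᶠ y in 𝓝 x, DifferentiableAt ℝ w (polar H y) := by
    have : ∀ᶠ s in 𝓝 (polar H x), DifferentiableAt ℝ w s := by
      filter_upwards [hw.eventually (by simp)] with s hs using hs.differentiableAt (by norm_num)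
    exact hP.continuousAt.eventually this
  have hgv : ∀ᶠ y in 𝓝 x, gradient v y = (deriv w (polar H y) / polar H y) • T y := by
    filter_upwards [hev, hwd] with y h1 h2
    have h3 : HasFDerivAt v (deriv w (polar H y) • innerSL ℝ ((polar H y)⁻¹ • T y)) y := by
      have : v = w ∘ polar H := funext hv
      rw [this]
      exact h2.hasDerivAt.comp_hasFDerivAt y h1.2.2.2.2
    apply ext_inner_right ℝ
    intro k
    rw [inner_grad, h3.fderiv]
    simp [inner_smul_left]
    ring
  have hgF : ∀ᶠ y in 𝓝 x, gradient (Fani H) (gradient v y)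
      = (deriv w (polar H y) / polar H y) • y := by
    filter_upwards [hev, hgv] with y h1 h2
    rw [h2, grad_smul hH _ h1.1, h1.2.1]
  refine ⟨hvcd, ?_, hgF.self_of_nhds⟩
  obtain ⟨t1, t2, t3, t4, t5⟩ := hev.self_of_nhds
  have hw1 : HasDerivAt (deriv w) (deriv (deriv w) (polar H x)) (polar H x) := by
    have : ContDiffAt ℝ 1 (deriv w) (polar H x) := by
      have h1 : ContDiffAt ℝ 1 (fderiv ℝ w) (polar H x) := hw.fderiv_right (by norm_num)
      exact h1.clm_apply contDiffAt_const
    exact (this.differentiableAt (by norm_num)).hasDerivAt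
  have hφ := hw1.div (hasDerivAt_id (polar H x)) t3.ne'
  have ha := hφ.comp_hasFDerivAt x t5
  simp only [id, mul_one] at ha
  have hMd := ((grad_cd hvcd).differentiableAt (by norm_num)).hasFDerivAt
  set M := fderiv ℝ (gradient v) x
  rw [Amat, Matrix.det_mul]
  have hin : T x 0 * x 0 + T x 1 * x 1 = polar H x ^ 2 := by
    rw [← t4, PiLp.inner_apply, Fin.sum_univ_two]
    simp [mul_comm]
  set r := polar H x with hr
  set w1 := deriv w r
  set w2 := deriv (deriv w) r
  rcases eq_or_ne w1 0 with h0 | h0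
  · have hTd := (hT.differentiableAt (by norm_num)).hasFDerivAt
    have h1 := (ha.smul hTd).congr_of_eventuallyEq hgv
    have h2 : (deriv w / id : ℝ → ℝ) (polar H x) = 0 := by
      have : (deriv w / id : ℝ → ℝ) (polar H x) = w1 / r := rfl
      rw [this, h0, zero_div]
    simp only [Matrix.det_fin_two, hessian_apply h1, Function.comp_apply, h2]
    simp [h0]
    right
    ring
  · have hne : gradient v x ≠ 0 := by
      rw [hgv.self_of_nhds]
      exact smul_ne_zero (div_ne_zero h0 t3.ne') t1
    have hLd := ((grad_cd (F_cd hH hne)).differentiableAt (by norm_num)).hasFDerivAt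
    have h1 := (ha.smul (hasFDerivAt_id x)).congr_of_eventuallyEq hgF
    have h2 := (hLd.comp x hMd).unique h1
    rw [hessian_comp_det hLd hMd]
    have h3 : ∀ k j, fderiv ℝ (gradient (Fani H)) (gradient v x) (M k) j =
        w1 / r * k j + (w2 * r - w1) / r ^ 2 * (r⁻¹ * ⟪T x, k⟫) * x j := by
      intro k j
      have := congrArg (fun L => L k j) h2
      simpa [inner_smul_left, ← hr] using this
    simp only [Matrix.det_fin_two, Matrix.of_apply, h3, EuclideanSpace.inner_single_right]
    simp
    have key : (w1 / r) ^ 2 + w1 / r * ((w2 * r - w1) / r ^ 2) * (r⁻¹ * r ^ 2) = w1 * w2 / r := by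
      field_simp; ring
    linear_combination (w1 / r * ((w2 * r - w1) / r ^ 2) * r⁻¹) * hin + key

end AnisoAux

/-- for a `C²` function `w` on `[0,R]` and `v(x) = w(H^o(x))`, the
function `v` is `C²` on `𝒲_R ∖ {0}` and, with `r = H^o(x)`,
`det A[v](x) = w'(r) w''(r)/r = [((w')²)'](r)/(2r)` and `F_ξ(∇v(x)) = w'(r)·x/H^o(x)`. -/
theorem aniso_mongeAmpere_radial
    (H : E2 → ℝ) (hH : IsAnisoNorm H) (R : ℝ) (hR : 0 < R)
    (w : ℝ → ℝ) (hw : ContDiffOn ℝ 2 w (Icc 0 R))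
    (v : E2 → ℝ) (hv : ∀ x, v x = w (polar H x)) :
    ContDiffOn ℝ 2 v (wulffR H R \ {0}) ∧
    ∀ x ∈ wulffR H R \ {0},
      (Amat H v x).det = deriv w (polar H x) * deriv (deriv w) (polar H x) / polar H x ∧
      (Amat H v x).det = deriv (fun t => deriv w t ^ 2) (polar H x) / (2 * polar H x) ∧
      gradient (Fani H) (gradient v x) = (deriv w (polar H x) / polar H x) • x := by
  have hpt : ∀ x ∈ wulffR H R \ {0}, x ≠ 0 ∧ ContDiffAt ℝ 2 w (polar H x) := by
    rintro x ⟨h1, h2⟩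
    have hx : x ≠ 0 := h2
    obtain ⟨T, -, -, hev⟩ := AnisoAux.polar_local hH hx
    exact ⟨hx, hw.contDiffAt (Icc_mem_nhds hev.self_of_nhds.2.2.1 h1)⟩
  refine ⟨fun x hx => ?_, fun x hx => ?_⟩
  · obtain ⟨h1, h2⟩ := hpt x hx
    exact (AnisoAux.main_local hH h1 h2 hv).1.contDiffWithinAt
  · obtain ⟨h1, h2⟩ := hpt x hx
    obtain ⟨-, h3, h4⟩ := AnisoAux.main_local hH h1 h2 hv
    refine ⟨h3, ?_, h4⟩
    have hd : DifferentiableAt ℝ (deriv w) (polar H x) := by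
      have h1 : ContDiffAt ℝ 1 (fderiv ℝ w) (polar H x) := h2.fderiv_right (by norm_num)
      have h5 : ContDiffAt ℝ 1 (deriv w) (polar H x) := h1.clm_apply contDiffAt_const
      exact h5.differentiableAt (by norm_num)
    have h6 := (hd.hasDerivAt.pow 2).deriv
    have h7 : deriv (fun t => deriv w t ^ 2) (polar H x)
        = 2 * (deriv w (polar H x) * deriv (deriv w) (polar H x)) := by
      refine Eq.trans h6 ?_
      push_cast
      ring
    rw [h3, h7, mul_div_mul_left _ _ (two_ne_zero)]
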